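/- The unique maximizer (π_F, κ_F) of (π,κ) ↦ inf over (θ₁,θ₂) of F(π, κ, θ₁, θ₂) equals exactly one half of the unique maximizer (π_G, κ_G) of G, i.e. π_F = π_G/2 and κ_F = κ_G/2; moreover sup over (π,κ) of G minus sup over (π,κ) of inf over (θ₁,θ₂) of F equals (1/4)·[ι² + (λ−a+ρbι)²/((1−ρ²)b²)], which is nonnegative. (Thus an ambiguity-averse insurer cuts both investment and insurance in half, and the pointwise utility loss due to ambiguity aversion is (1/4)·[ι² + (λ−a+ρbι)²/((1−ρ²)b²)].) -/

import Mathlib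

theorem aux_sq (x y : ℝ) (h : x^2 + y^2 ≤ 0) : x = 0 ∧ y = 0 := by
  constructor <;> nlinarith [sq_nonneg x, sq_nonneg y]

theorem aux_sup2 (g : ℝ → ℝ → ℝ) (K x0 y0 : ℝ) (h : ∀ x y, g x y ≤ K) (h0 : g x0 y0 = K) :
    (⨆ x : ℝ, ⨆ y : ℝ, g x y) = K := by
  apply le_antisymm
  · exact ciSup_le fun x => ciSup_le fun y => h x y
  · have h1 : g x0 y0 ≤ ⨆ y : ℝ, g x0 y :=
      le_ciSup (f := fun y => g x0 y) ⟨K, by rintro _ ⟨y, rfl⟩; exact h x0 y⟩ y0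
    have h2 : (⨆ y : ℝ, g x0 y) ≤ ⨆ x : ℝ, ⨆ y : ℝ, g x y :=
      le_ciSup (f := fun x => ⨆ y : ℝ, g x y)
        ⟨K, by rintro _ ⟨x, rfl⟩; exact ciSup_le fun y => h x y⟩ x0
    linarith

theorem aux_inf2 (g : ℝ → ℝ → ℝ) (K x0 y0 : ℝ) (h : ∀ x y, K ≤ g x y) (h0 : g x0 y0 = K) :
    (⨅ x : ℝ, ⨅ y : ℝ, g x y) = K := by
  apply le_antisymm
  · have h1 : (⨅ y : ℝ, g x0 y) ≤ g x0 y0 :=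
      ciInf_le (f := fun y => g x0 y) ⟨K, by rintro _ ⟨y, rfl⟩; exact h x0 y⟩ y0
    have h2 : (⨅ x : ℝ, ⨅ y : ℝ, g x y) ≤ ⨅ y : ℝ, g x0 y :=
      ciInf_le (f := fun x => ⨅ y : ℝ, g x y)
        ⟨K, by rintro _ ⟨x, rfl⟩; exact le_ciInf fun y => h x y⟩ x0
    linarith
  · exact le_ciInf fun x => le_ciInf fun y => h x y

/-- **Ambiguity aversion halves the optimal strategy.**
The (unique) maximizer `(π_F, κ_F)` of `(π,κ) ↦ inf_{θ₁,θ₂} F(π,κ,θ₁,θ₂)` equals exactly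
one half of the (unique) maximizer `(π_G, κ_G)` of `G = F(·,·,0,0)`, and
`sup G − sup inf F = (1/4)[ι² + (λ−a+ρbι)²/((1−ρ²)b²)] ≥ 0`. -/
theorem ambiguity_halves_strategy
    (μ₀ r lam a σ b ρ : ℝ)
    (hσ : 0 < σ) (hb : 0 < b) (hρ₁ : -1 < ρ) (hρ₂ : ρ < 1)
    (ι : ℝ) (hι : ι = (μ₀ - r) / σ)
    (F : ℝ → ℝ → ℝ → ℝ → ℝ)
    (hF : ∀ π κ θ₁ θ₂ : ℝ, F π κ θ₁ θ₂ =
      (μ₀ - r) * π + (lam - a) * κ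
        - (1/2) * ((σ*π - ρ*b*κ)^2 + (1 - ρ^2) * b^2 * κ^2)
        + (σ*π - ρ*b*κ) * θ₁ - Real.sqrt (1 - ρ^2) * b * κ * θ₂
        + (1/2) * (θ₁^2 + θ₂^2))
    (G : ℝ → ℝ → ℝ)
    (hG : ∀ π κ : ℝ, G π κ = F π κ 0 0)
    (πF κF : ℝ)
    (hmaxF : ∀ π κ : ℝ,
      (⨅ θ₁ : ℝ, ⨅ θ₂ : ℝ, F π κ θ₁ θ₂) ≤ (⨅ θ₁ : ℝ, ⨅ θ₂ : ℝ, F πF κF θ₁ θ₂))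
    (πG κG : ℝ)
    (hmaxG : ∀ π κ : ℝ, G π κ ≤ G πG κG) :
    πF = πG / 2 ∧ κF = κG / 2 ∧
    (⨆ π : ℝ, ⨆ κ : ℝ, G π κ)
        - (⨆ π : ℝ, ⨆ κ : ℝ, ⨅ θ₁ : ℝ, ⨅ θ₂ : ℝ, F π κ θ₁ θ₂)
      = (1/4) * (ι^2 + (lam - a + ρ*b*ι)^2 / ((1 - ρ^2) * b^2)) ∧
    0 ≤ (1/4) * (ι^2 + (lam - a + ρ*b*ι)^2 / ((1 - ρ^2) * b^2)) := by
  have hp : 0 < 1 - ρ^2 := by nlinarith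
  obtain ⟨s, hs⟩ : ∃ s, s = Real.sqrt (1 - ρ^2) := ⟨_, rfl⟩
  have hs0 : 0 < s := hs ▸ Real.sqrt_pos.mpr hp
  have hs2 : s^2 = 1 - ρ^2 := by rw [hs]; exact Real.sq_sqrt hp.le
  rw [← hs] at hF
  rw [← hs2] at hF ⊢
  obtain ⟨m, hm⟩ : ∃ m, m = (lam - a + ρ*b*ι) / (s*b) := ⟨_, rfl⟩
  have hm1 : m * (s*b) = lam - a + ρ*b*ι := by rw [hm]; field_simp
  have hι1 : ι * σ = μ₀ - r := by rw [hι]; field_simp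
  have hl : ∀ π κ : ℝ, (μ₀ - r) * π + (lam - a) * κ
      = ι * (σ*π - ρ*b*κ) + m * (s*b*κ) := by
    intro π κ
    rw [← hι1]
    linear_combination (-κ) * hm1
  have hm2 : (lam - a + ρ*b*ι)^2 / (s^2 * b^2) = m^2 := by
    rw [hm, div_pow, mul_pow]
  rw [hm2]
  have hI : ∀ π κ : ℝ, (⨅ θ₁ : ℝ, ⨅ θ₂ : ℝ, F π κ θ₁ θ₂) =
      (ι^2 + m^2)/4 - ((σ*π - ρ*b*κ - ι/2)^2 + (s*b*κ - m/2)^2) := by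
    intro π κ
    apply aux_inf2 _ _ (-(σ*π - ρ*b*κ)) (s*b*κ)
    · intro x y
      rw [hF, hl]
      nlinarith [sq_nonneg (x + (σ*π - ρ*b*κ)), sq_nonneg (y - s*b*κ)]
    · rw [hF, hl]; ring
  have hG' : ∀ π κ : ℝ, G π κ =
      (ι^2 + m^2)/2 - (1/2) * ((σ*π - ρ*b*κ - ι)^2 + (s*b*κ - m)^2) := by
    intro π κ
    rw [hG, hF, hl]; ring
  -- explicit solutions
  have hsol : ∀ u v : ℝ, ∃ π κ : ℝ, σ*π - ρ*b*κ = u ∧ s*b*κ = v := by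
    intro u v
    refine ⟨(u + ρ*b*(v/(s*b)))/σ, v/(s*b), ?_, ?_⟩ <;> field_simp
    ring
  obtain ⟨p1, k1, h1, h1'⟩ := hsol (ι/2) (m/2)
  obtain ⟨p2, k2, h2, h2'⟩ := hsol ι m
  have hA := hmaxF p1 k1
  rw [hI, hI, h1, h1'] at hA
  have hB := hmaxG p2 k2
  rw [hG', hG', h2, h2'] at hB
  simp only [sub_self] at hA hB
  obtain ⟨e1, e2⟩ := aux_sq (σ*πF - ρ*b*κF - ι/2) (s*b*κF - m/2) (by linarith)
  obtain ⟨e3, e4⟩ := aux_sq (σ*πG - ρ*b*κG - ι) (s*b*κG - m) (by linarith)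
  have hκ : κF = κG / 2 := by
    apply mul_left_cancel₀ (mul_pos hs0 hb).ne'
    linear_combination e2 - e4/2
  refine ⟨?_, hκ, ?_, by positivity⟩
  · apply mul_left_cancel₀ hσ.ne'
    linear_combination e1 - e3/2 + ρ*b*hκ
  · rw [aux_sup2 G ((ι^2 + m^2)/2) p2 k2, aux_sup2 _ ((ι^2 + m^2)/4) p1 k1]
    · ring
    · intro x y
      rw [hI]
      linarith [sq_nonneg (σ*x - ρ*b*y - ι/2), sq_nonneg (s*b*y - m/2)]
    · rw [hI, h1, h1']; ring
    · intro x y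
      rw [hG']
      linarith [sq_nonneg (σ*x - ρ*b*y - ι), sq_nonneg (s*b*y - m)]
    · rw [hG', h2, h2']; ring
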